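/- Let q = p^h with p an odd prime. Let A be a set of exactly q affine points of PG(2,q) and let D ⊆ L∞ be the set of directions determined by A. If |D| < (q+3)/2, then A together with the complement of D in L∞, i.e. the set A ∪ (L∞ \ D), is a set without tangents in PG(2,q). -/

import Mathlib

/-!
`PG(2,F)`: points are the 1-dimensional subspaces of `F^3` (modelled as the
projectivization of `Fin 3 → F`), lines are the 2-dimensional subspaces.
-/

variable {F : Type*} [Field F]

/-- The points of `PG(2,F)`: 1-dimensional subspaces of `F^3`. -/
abbrev PGPoint (F : Type*) [Field F] := Projectivization F (Fin 3 → F)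

/-- A line of `PG(2,F)` is a 2-dimensional subspace of `F^3`. -/
def IsProjLine (F : Type*) [Field F] (L : Submodule F (Fin 3 → F)) : Prop :=
  Module.finrank F L = 2

/-- The set of projective points lying on the subspace `L`. -/
def pointsOn (L : Submodule F (Fin 3 → F)) : Set (PGPoint F) :=
  {P | P.submodule ≤ L}

/-- `S` is a set without tangents: no line of `PG(2,F)` meets `S` in exactly one point. -/
def NoTangents (S : Set (PGPoint F)) : Prop :=
  ∀ L : Submodule F (Fin 3 → F), IsProjLine F L →
    ¬ (∃! P : PGPoint F, P ∈ S ∩ pointsOn L)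

/-- The line at infinity `Z = 0` of `PG(2,F)`. -/
def Linf (F : Type*) [Field F] : Submodule F (Fin 3 → F) :=
  LinearMap.ker (LinearMap.proj 2 : (Fin 3 → F) →ₗ[F] F)

/-- The set of directions (points of the line at infinity) determined by a set `A`
of affine points: for distinct `⟨(x₁,y₁,1)⟩`, `⟨(x₂,y₂,1)⟩` in `A` the determined
direction is `⟨(x₁-x₂, y₁-y₂, 0)⟩` (which is `⟨(1,(y₁-y₂)/(x₁-x₂),0)⟩` if `x₁ ≠ x₂`
and `⟨(0,1,0)⟩` if `x₁ = x₂`). -/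
def dirs (A : Set (PGPoint F)) : Set (PGPoint F) :=
  {d | ∃ P1 ∈ A, ∃ P2 ∈ A, P1 ≠ P2 ∧ ∃ x1 y1 x2 y2 : F,
    P1.submodule = Submodule.span F {![x1, y1, 1]} ∧
    P2.submodule = Submodule.span F {![x2, y2, 1]} ∧
    d.submodule = Submodule.span F {![x1 - x2, y1 - y2, 0]}}

/-!
To a set of `q` points `(a i, b i)` of an affine plane of order `q` attach its Rédei polynomial
`∏ (Y - (a i * X + b i))`. Substituting a value `t` of `X` amounts to projecting the points along
the direction `t`. If `t` is not determined, the projection is a bijection and the result is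
`Y ^ q - Y`. As most directions are not determined, the coefficients of `Y ^ k` with
`q / 2 < k < q` have too many zeros, hence vanish, so a determined `t` yields `Y ^ q + g` with
`2 * deg g ≤ q`. Such a polynomial splits into linear factors, and if one of its roots is simple
it must be `Y ^ q - Y`, which is not the case for a determined `t`. Hence every line of a
determined direction that meets the set does so at least twice, while every line of another
direction meets it exactly once. Counting on the lines through a point of the set, at least two
directions are not determined, so the line at infinity is not a tangent either.
-/

section SplitPolynomials

open Polynomial

theorem dvd_mul_derivative_of_splits {f h : F[X]} (hf : f.Splits)
    (hroot : ∀ r, f.IsRoot r → h.IsRoot r) : f ∣ h * derivative f := by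
  classical
  by_cases hh : h * derivative f = 0
  · exact hh ▸ dvd_zero f
  have hf' : derivative f ≠ 0 := right_ne_zero_of_mul hh
  have hf0 : f ≠ 0 := fun h0 => hf' (by simp [h0])
  refine hf.dvd_of_roots_le_roots hf0 (Multiset.le_iff_count.2 fun r => ?_)
  rw [count_roots, count_roots, rootMultiplicity_mul hh]
  by_cases hr : f.IsRoot r
  · have h1 : 0 < h.rootMultiplicity r :=
      (rootMultiplicity_pos (left_ne_zero_of_mul hh)).2 (hroot r hr)
    have h2 := rootMultiplicity_sub_one_le_derivative_rootMultiplicity_of_ne_zero f r hf'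
    omega
  · simp [rootMultiplicity_eq_zero hr]

variable {ι : Type*} {s : Finset ι} {b : ι → F}

theorem derivative_prod_X_sub_C_ne_zero {i₀ : ι} (hi₀ : i₀ ∈ s)
    (hsimple : ∀ j ∈ s, b j = b i₀ → j = i₀) : derivative (∏ i ∈ s, (X - C (b i))) ≠ 0 := by
  classical
  refine fun h0 => ?_
  have heval : (∏ i ∈ s.erase i₀, (X - C (b i))).eval (b i₀) = 0 := by
    simpa [← Finset.mul_prod_erase s _ hi₀] using congrArg (eval (b i₀)) h0
  rw [eval_prod, Finset.prod_eq_zero_iff] at heval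
  obtain ⟨j, hj, hji⟩ := heval
  rw [Finset.mem_erase] at hj
  exact hj.1 (hsimple j hj.2 (by simpa [sub_eq_zero, eq_comm] using hji))

variable [Fintype F]

theorem separable_X_pow_card_sub_X : (X ^ Fintype.card F - X : F[X]).Separable :=
  galois_poly_separable (ringChar F) _
    ((CharP.cast_eq_zero_iff F (ringChar F) _).1 (FiniteField.cast_card_eq_zero F))

theorem prod_X_sub_C_eq_X_pow_card_sub_X (hs : s.card = Fintype.card F) (hb : Set.InjOn b s) :
    ∏ i ∈ s, (X - C (b i)) = X ^ Fintype.card F - X := by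
  classical
  have himage : s.image b = Finset.univ := by
    rw [← Finset.card_eq_iff_eq_univ, Finset.card_image_of_injOn hb, hs]
  have hmonic : (X ^ Fintype.card F - X : F[X]).Monic :=
    monic_X_pow_sub (by simpa using Fintype.one_lt_card (α := F))
  have hroots := prod_multiset_X_sub_C_of_monic_of_roots_card_eq hmonic <| by
    rw [FiniteField.roots_X_pow_card_sub_X,
      FiniteField.X_pow_card_sub_X_natDegree_eq F Fintype.one_lt_card, Finset.card_val,
      Finset.card_univ]
  rw [FiniteField.roots_X_pow_card_sub_X, ← himage] at hroots
  exact (Finset.prod_image hb).symm.trans hroots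

theorem derivative_X_pow_card_add (g : F[X]) :
    derivative (X ^ Fintype.card F + g) = derivative g := by
  simp [derivative_X_pow]

/-- Every root `r` of `X ^ q + g` satisfies `r = r ^ q = -g(r)`, so `X ^ q + g` divides
`(X + g) * g'`, which has smaller degree. -/
theorem eq_neg_X_of_splits_X_pow_card_add {g : F[X]} (hsplits : (X ^ Fintype.card F + g).Splits)
    (hdeg : 2 * g.natDegree ≤ Fintype.card F) (hg : derivative g ≠ 0) : g = -X := by
  have hdvd : X ^ Fintype.card F + g ∣ (X + g) * derivative g := by
    rw [← derivative_X_pow_card_add g]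
    refine dvd_mul_derivative_of_splits hsplits fun r hr => ?_
    simpa [FiniteField.pow_card] using hr
  have hq : 1 < Fintype.card F := Fintype.one_lt_card
  have hlt : ((X + g) * derivative g).natDegree < (X ^ Fintype.card F + g).natDegree := by
    have hX : (X + g).natDegree ≤ max 1 g.natDegree :=
      (natDegree_add_le _ _).trans_eq (by rw [natDegree_X])
    have hg' : (derivative g).natDegree ≤ g.natDegree - 1 := natDegree_derivative_le g
    have hf : (X ^ Fintype.card F + g).natDegree = Fintype.card F := by
      rw [natDegree_add_eq_left_of_natDegree_lt (by rw [natDegree_X_pow]; omega), natDegree_X_pow]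
    have hmul : ((X + g) * derivative g).natDegree ≤ _ := natDegree_mul_le
    omega
  have hzero : (X + g) * derivative g = 0 := eq_zero_of_dvd_of_natDegree_lt hdvd hlt
  exact eq_neg_of_add_eq_zero_right ((mul_eq_zero.1 hzero).resolve_right hg)

theorem injOn_of_prod_X_sub_C_eq_X_pow_card_add {g : F[X]}
    (hg : ∏ i ∈ s, (X - C (b i)) = X ^ Fintype.card F + g)
    (hdeg : 2 * g.natDegree ≤ Fintype.card F) {i₀ : ι} (hi₀ : i₀ ∈ s)
    (hsimple : ∀ j ∈ s, b j = b i₀ → j = i₀) : Set.InjOn b s := by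
  have hgX : g = -X := by
    refine eq_neg_X_of_splits_X_pow_card_add ?_ hdeg ?_
    · exact hg ▸ Splits.prod fun i _ => Splits.X_sub_C (b i)
    · rw [← derivative_X_pow_card_add, ← hg]
      exact derivative_prod_X_sub_C_ne_zero hi₀ hsimple
  have hsep : (∏ i ∈ s, (X - C (b i))).Separable := by
    rw [hg, hgX, ← sub_eq_add_neg]
    exact separable_X_pow_card_sub_X
  intro i hi j hj hij
  exact separable_prod_X_sub_C_iff'.1 hsep i hi j hj hij

end SplitPolynomials

section RedeiPolynomial

open Polynomial

variable {ι : Type*} {R : Type*} [CommRing R]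

theorem natDegree_coeff_prod_X_sub_C_le (s : Finset ι) {l : ι → R[X]}
    (hl : ∀ i ∈ s, (l i).natDegree ≤ 1) (k : ℕ) :
    ((∏ i ∈ s, (X - C (l i))).coeff k).natDegree ≤ s.card - k := by
  rcases lt_or_ge s.card k with hk | hk
  · have hdeg : (∏ i ∈ s, (X - C (l i))).natDegree ≤ s.card := by
      refine (natDegree_prod_le _ _).trans ?_
      simpa using Finset.sum_le_card_nsmul s _ 1 fun i _ => natDegree_X_sub_C_le (l i)
    simp [coeff_eq_zero_of_natDegree_lt (hdeg.trans_lt hk)]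
  have hcoeff : (∏ i ∈ s, (X - C (l i))).coeff k =
      (-1) ^ (s.card - k) * ∑ t ∈ s.powersetCard (s.card - k), ∏ i ∈ t, l i := by
    have h := (s.val.map l).prod_X_sub_C_coeff (k := k) (by simpa using hk)
    rwa [Finset.esymm_map_val, Multiset.map_map, Multiset.card_map] at h
  have hunit : ((-1 : R[X]) ^ (s.card - k)).natDegree = 0 := by
    rcases neg_one_pow_eq_or R[X] (s.card - k) with h | h <;> simp [h]
  rw [hcoeff]
  refine (natDegree_mul_le_of_le hunit.le
    (natDegree_sum_le_of_forall_le _ _ fun t ht => ?_)).trans_eq (zero_add _)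
  obtain ⟨hts, hcard⟩ := Finset.mem_powersetCard.1 ht
  calc (∏ i ∈ t, l i).natDegree ≤ ∑ i ∈ t, (l i).natDegree := natDegree_prod_le _ _
    _ ≤ t.card • 1 := Finset.sum_le_card_nsmul t _ 1 fun i hi => hl i (hts hi)
    _ = s.card - k := by rw [hcard, smul_eq_mul, mul_one]

/-- The Rédei polynomial `∏ (Y - (a i * X + b i))` of the points `(a i, b i)`, as a polynomial in
`Y` over `R[X]`. Substituting `X = t` gives the polynomial whose roots are the values of
`a i * t + b i`, that is, the lines of a fixed direction through the points. -/
noncomputable def redeiPolynomial (s : Finset ι) (a b : ι → R) : R[X][X] :=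
  ∏ i ∈ s, (X - C (C (a i) * X + C (b i)))

theorem redeiPolynomial_map_evalRingHom (s : Finset ι) (a b : ι → R) (t : R) :
    (redeiPolynomial s a b).map (evalRingHom t) = ∏ i ∈ s, (X - C (a i * t + b i)) := by
  simp [redeiPolynomial, Polynomial.map_prod]

theorem natDegree_coeff_redeiPolynomial_le (s : Finset ι) (a b : ι → R) (k : ℕ) :
    ((redeiPolynomial s a b).coeff k).natDegree ≤ s.card - k :=
  natDegree_coeff_prod_X_sub_C_le s (fun _ _ => natDegree_linear_le) k

variable [Fintype F] {s : Finset ι} {a b : ι → F} {T : Finset F}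

/-- For `t ∉ T` the substitution `X = t` turns the Rédei polynomial into `Y ^ q - Y`, so its `k`-th
coefficient, of degree at most `q - k`, vanishes at more than `q - k` points. -/
theorem coeff_redeiPolynomial_eq_zero (hs : s.card = Fintype.card F)
    (hT : ∀ t ∉ T, Set.InjOn (fun i => a i * t + b i) s) {k : ℕ} (hTk : T.card < k) (hk1 : k ≠ 1)
    (hkq : k < Fintype.card F) : (redeiPolynomial s a b).coeff k = 0 := by
  classical
  refine eq_zero_of_natDegree_lt_card_of_eval_eq_zero' _ Tᶜ (fun t ht => ?_) ?_
  · have hmap : (redeiPolynomial s a b).map (evalRingHom t) = X ^ Fintype.card F - X := by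
      rw [redeiPolynomial_map_evalRingHom]
      exact prod_X_sub_C_eq_X_pow_card_sub_X hs (hT t (Finset.mem_compl.1 ht))
    rw [← coe_evalRingHom, ← coeff_map, hmap, coeff_sub, coeff_X_pow, coeff_X, if_neg hkq.ne,
      if_neg hk1.symm, sub_zero]
  · have hdeg := natDegree_coeff_redeiPolynomial_le s a b k
    rw [Finset.card_compl]
    omega

theorem natDegree_prod_X_sub_C_sub_X_pow_card_le (hs : s.card = Fintype.card F)
    (hT : ∀ t ∉ T, Set.InjOn (fun i => a i * t + b i) s) {t : F} (ht : t ∈ T) :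
    (∏ i ∈ s, (X - C (a i * t + b i)) - X ^ Fintype.card F).natDegree ≤ T.card := by
  have hTpos : 0 < T.card := Finset.card_pos.2 ⟨t, ht⟩
  set f := ∏ i ∈ s, (X - C (a i * t + b i)) with hf
  have hmonic : f.Monic := monic_prod_X_sub_C _ _
  have hdeg : f.natDegree = Fintype.card F := by rw [hf, natDegree_finsetProd_X_sub_C_eq_card, hs]
  rw [natDegree_le_iff_coeff_eq_zero]
  intro k hk
  rw [coeff_sub, coeff_X_pow]
  rcases lt_trichotomy k (Fintype.card F) with hlt | rfl | hgt
  · rw [if_neg hlt.ne, hf, ← redeiPolynomial_map_evalRingHom, coeff_map,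
      coeff_redeiPolynomial_eq_zero hs hT hk (by omega) hlt, map_zero, sub_zero]
  · rw [if_pos rfl, ← hdeg, hmonic.coeff_natDegree, sub_self]
  · rw [if_neg hgt.ne', coeff_eq_zero_of_natDegree_lt (hdeg ▸ hgt), sub_zero]

theorem exists_ne_mul_add_eq_of_not_injOn (hs : s.card = Fintype.card F)
    (hcard : 2 * {t | ¬ Set.InjOn (fun i => a i * t + b i) s}.ncard ≤ Fintype.card F) {t : F}
    (ht : ¬ Set.InjOn (fun i => a i * t + b i) s) {i₀ : ι} (hi₀ : i₀ ∈ s) :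
    ∃ j ∈ s, j ≠ i₀ ∧ a j * t + b j = a i₀ * t + b i₀ := by
  classical
  by_contra! hsimple
  set T : Set F := {t | ¬ Set.InjOn (fun i => a i * t + b i) s}
  have hmem (u : F) : u ∈ T.toFinset ↔ ¬ Set.InjOn (fun i => a i * u + b i) s := Set.mem_toFinset
  have hdeg := natDegree_prod_X_sub_C_sub_X_pow_card_le hs
    (fun u hu => not_not.1 (mt (hmem u).2 hu)) ((hmem t).2 ht)
  rw [Set.ncard_eq_toFinset_card'] at hcard
  refine ht (injOn_of_prod_X_sub_C_eq_X_pow_card_add (add_sub_cancel _ _).symm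
    (by omega) hi₀ fun j hj hji => ?_)
  by_contra hne
  exact hsimple j hj hne hji

end RedeiPolynomial

section Directions

open Module

variable {V : Type*} [AddCommGroup V] [Module F V]

/-- The directions determined by a set `S` of points of an `F`-vector space `V`: the
one-dimensional subspaces spanned by the differences of two distinct points of `S`. -/
def directions (F : Type*) [Field F] {V : Type*} [AddCommGroup V] [Module F V] (S : Set V) :
    Set (Projectivization F V) :=
  {d | ∃ u ∈ S, ∃ v ∈ S, u ≠ v ∧ u - v ∈ d.submodule}

theorem mem_submodule_iff_mk_eq {v : V} (hv : v ≠ 0) {d : Projectivization F V} :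
    v ∈ d.submodule ↔ Projectivization.mk F v hv = d := by
  rw [d.submodule_eq, Submodule.mem_span_singleton, ← Projectivization.mk_eq_mk_iff' F v _ hv
    d.rep_nonzero, d.mk_rep]

variable {S : Set V}

theorem mem_directions_iff_exists_mk_eq {d : Projectivization F V} :
    d ∈ directions F S ↔ ∃ u ∈ S, ∃ v ∈ S, ∃ huv : u ≠ v,
      Projectivization.mk F (u - v) (sub_ne_zero.2 huv) = d := by
  simp only [directions, Set.mem_ofPred_eq, ← mem_submodule_iff_mk_eq, exists_prop]

theorem exists_dual_ker_eq {n : ℕ} {H : Submodule F V} (hH : finrank F H = n)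
    (hV : finrank F V = n + 1) : ∃ f : Dual F V, LinearMap.ker f = H := by
  have : FiniteDimensional F V := finite_of_finrank_eq_succ hV
  have hlt : H < ⊤ := by
    refine lt_top_iff_ne_top.2 fun h => ?_
    rw [h, finrank_top] at hH
    omega
  obtain ⟨f, hf, hle⟩ := H.exists_le_ker_of_lt_top hlt
  have hker := Dual.finrank_ker_add_one_of_ne_zero hf
  exact ⟨f, (Submodule.eq_of_le_of_finrank_eq hle (by omega)).symm⟩

theorem mem_directions_iff_not_injOn {W : Type*} [AddCommGroup W] [Module F W] {f : V →ₗ[F] W}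
    {d : Projectivization F V} (hf : LinearMap.ker f = d.submodule) :
    d ∈ directions F S ↔ ¬ Set.InjOn f S := by
  simp only [directions, Set.mem_ofPred_eq, Set.InjOn, ← hf, LinearMap.sub_mem_ker_iff]
  push Not
  exact exists_congr fun u => and_congr_right fun _ => exists_congr fun v => by tauto

/-- If `f + t • g` takes the same value at `u ≠ v`, then `t` is determined by the direction of
`u - v`. -/
theorem setOf_not_injOn_subset_image_directions {f g : Dual F V} {e : Projectivization F V}
    (hfg : Disjoint (LinearMap.ker f) (LinearMap.ker g)) (hg : LinearMap.ker g = e.submodule) :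
    {t | ¬ Set.InjOn (fun v => g v * t + f v) S} ⊆
      (fun d => -f d.rep / g d.rep) '' (directions F S \ {e}) := by
  intro t ht
  simp only [Set.mem_ofPred_eq, Set.InjOn, not_forall] at ht
  obtain ⟨u, hu, v, hv, huv, hne⟩ := ht
  have hsub : u - v ≠ 0 := sub_ne_zero.2 hne
  have hval : g (u - v) * t + f (u - v) = 0 := by
    simp only [map_sub]
    linear_combination huv
  have hg_ne : g (u - v) ≠ 0 := fun h0 =>
    hsub (Submodule.disjoint_def.1 hfg _ (by simpa [h0] using hval) h0)
  obtain ⟨c, hc⟩ := Projectivization.exists_smul_eq_mk_rep F (u - v) hsub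
  refine ⟨Projectivization.mk F (u - v) hsub, ⟨?_, fun hde => hg_ne ?_⟩, ?_⟩
  · exact mem_directions_iff_exists_mk_eq.2 ⟨u, hu, v, hv, hne, rfl⟩
  · rwa [← LinearMap.mem_ker, hg, mem_submodule_iff_mk_eq hsub]
  · have hc0 : (c : F) ≠ 0 := c.ne_zero
    simp only [← hc, Units.smul_def, map_smul, smul_eq_mul]
    field_simp
    linear_combination -hval

theorem exists_ne_ncard_sdiff_singleton_le {α : Type*} [Finite α] [Nontrivial α] (D : Set α)
    (d : α) : ∃ e ≠ d, (D \ {e}).ncard ≤ max 1 (D.ncard - 1) := by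
  by_cases hD : ∃ e ∈ D, e ≠ d
  · obtain ⟨e, he, hed⟩ := hD
    exact ⟨e, hed, (Set.ncard_sdiff_singleton_of_mem he).trans_le (le_max_right _ _)⟩
  · push Not at hD
    obtain ⟨e, he⟩ := exists_ne d
    refine ⟨e, he, le_max_of_le_left ?_⟩
    rw [← Set.ncard_singleton d]
    exact Set.ncard_le_ncard (fun x hx => hD x hx.1)

variable [Fintype F] (hV : finrank F V = 2) (hS : S.ncard = Fintype.card F)
include hV hS

theorem exists_sub_mem_submodule_of_notMem_directions {d : Projectivization F V}
    (hd : d ∉ directions F S) (v : V) : ∃ u ∈ S, u - v ∈ d.submodule := by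
  obtain ⟨f, hf⟩ := exists_dual_ker_eq d.finrank_submodule hV
  have hinj : Set.InjOn f S := not_not.1 (mt (mem_directions_iff_not_injOn hf).2 hd)
  have himage : f '' S = Set.univ := by
    rw [Set.eq_univ_iff_ncard, hinj.ncard_image, hS, Nat.card_eq_fintype_card]
  obtain ⟨u, hu, huv⟩ : f v ∈ f '' S := himage ▸ Set.mem_univ _
  exact ⟨u, hu, by rwa [← hf, LinearMap.sub_mem_ker_iff]⟩

variable (hD : 2 * (directions F S).ncard < Fintype.card F + 3)
include hD

theorem exists_ne_sub_mem_submodule_of_mem_directions {d : Projectivization F V}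
    (hd : d ∈ directions F S) {v : V} (hv : v ∈ S) : ∃ u ∈ S, u ≠ v ∧ u - v ∈ d.submodule := by
  have : FiniteDimensional F V := finite_of_finrank_eq_succ hV
  have : Finite V := finite_of_finite F
  have hq : 1 < Fintype.card F := Fintype.one_lt_card
  have : Nontrivial (Projectivization F V) := by
    rw [← Finite.one_lt_card_iff_nontrivial, Projectivization.card_of_finrank_two F V hV,
      Nat.card_eq_fintype_card]
    omega
  -- In the coordinates `(g, f)` below, `d` is `t = 0` and `e` corresponds to no `t`; taking `e`
  -- determined if possible leaves at most `q / 2` determined values of `t`.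
  obtain ⟨e, hed, he⟩ := exists_ne_ncard_sdiff_singleton_le (directions F S) d
  obtain ⟨f, hf⟩ := exists_dual_ker_eq d.finrank_submodule hV
  obtain ⟨g, hg⟩ := exists_dual_ker_eq e.finrank_submodule hV
  have hfg : Disjoint (LinearMap.ker f) (LinearMap.ker g) := by
    rw [hf, hg]
    refine (Submodule.isAtom_iff_finrank_eq_one.2 d.finrank_submodule).disjoint_of_ne
      (Submodule.isAtom_iff_finrank_eq_one.2 e.finrank_submodule) fun h => ?_
    exact hed (Projectivization.submodule_injective h).symm
  have hT : {t | ¬ Set.InjOn (fun v => g v * t + f v) S}.ncard ≤ (directions F S \ {e}).ncard :=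
    (Set.ncard_le_ncard (setOf_not_injOn_subset_image_directions hfg hg)).trans Set.ncard_image_le
  have hfinj : ¬ Set.InjOn f S := (mem_directions_iff_not_injOn hf).1 hd
  lift S to Finset V using S.toFinite
  obtain ⟨u, hu, huv, hfu⟩ := exists_ne_mul_add_eq_of_not_injOn (a := g) (b := f) (t := 0)
    (by simpa using hS) (by omega) (by simpa using hfinj) hv
  exact ⟨u, hu, huv, by rw [← hf, LinearMap.sub_mem_ker_iff]; simpa using hfu⟩

/-- The lines through a fixed `v ∈ S` in the determined directions each contain a further point of
`S`. -/
theorem ncard_directions_lt_card : (directions F S).ncard < Fintype.card F := by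
  have hSfin : S.Finite := Set.finite_of_ncard_pos (hS ▸ Fintype.card_pos)
  obtain ⟨v, hv⟩ : S.Nonempty := (Set.ncard_pos hSfin).1 (hS ▸ Fintype.card_pos)
  choose! w hwS hwv hw using fun d (hd : d ∈ directions F S) =>
    exists_ne_sub_mem_submodule_of_mem_directions hV hS hD hd hv
  have hinj : Set.InjOn w (directions F S) := fun d hd e he hde =>
    have hsub : w e - v ≠ 0 := sub_ne_zero.2 (hwv e he)
    ((mem_submodule_iff_mk_eq hsub).1 (hde ▸ hw d hd)).symm.trans
      ((mem_submodule_iff_mk_eq hsub).1 (hw e he))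
  calc (directions F S).ncard ≤ (S \ {v}).ncard :=
        Set.ncard_le_ncard_of_injOn w (fun d hd => ⟨hwS d hd, hwv d hd⟩) hinj hSfin.sdiff
    _ < S.ncard := Set.ncard_sdiff_singleton_lt_of_mem hv hSfin
    _ = Fintype.card F := hS

theorem one_lt_ncard_compl_directions : 1 < (directions F S)ᶜ.ncard := by
  have : FiniteDimensional F V := finite_of_finrank_eq_succ hV
  have : Finite V := finite_of_finite F
  have hlt := ncard_directions_lt_card hV hS hD
  rw [Set.ncard_compl, Projectivization.card_of_finrank_two F V hV, Nat.card_eq_fintype_card]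
  omega

end Directions

section ProjectivePlane

open Module

/-- The embedding `(x, y) ↦ (x, y, 0)` of `F²` in `F³`, whose image is the line at infinity. -/
def infinityEmbedding (F : Type*) [Field F] : F × F →ₗ[F] Fin 3 → F where
  toFun v := ![v.1, v.2, 0]
  map_add' u v := by simp
  map_smul' c v := by simp

theorem infinityEmbedding_injective : Function.Injective (infinityEmbedding F) := fun _ _ huv =>
  Prod.ext (congrFun huv 0) (congrFun huv 1)

theorem range_infinityEmbedding : LinearMap.range (infinityEmbedding F) = Linf F := by
  ext v
  refine ⟨?_, fun hv => ⟨(v 0, v 1), ?_⟩⟩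
  · rintro ⟨u, rfl⟩
    rfl
  · have hv2 : v 2 = 0 := hv
    ext i
    fin_cases i <;> simp [infinityEmbedding, hv2]

/-- The point `⟨(x, y, 0)⟩` at infinity of the lines of direction `⟨(x, y)⟩`. -/
def pointAtInfinity (d : Projectivization F (F × F)) : PGPoint F :=
  d.map (infinityEmbedding F) infinityEmbedding_injective

theorem pointAtInfinity_injective : Function.Injective (pointAtInfinity (F := F)) :=
  Projectivization.map_injective _ infinityEmbedding_injective

theorem submodule_pointAtInfinity_mk {v : F × F} (hv : v ≠ 0) :
    (pointAtInfinity (Projectivization.mk F v hv)).submodule =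
      Submodule.span F {![v.1, v.2, 0]} := by
  rw [pointAtInfinity, Projectivization.map_mk, Projectivization.submodule_mk]
  rfl

theorem submodule_pointAtInfinity (d : Projectivization F (F × F)) :
    (pointAtInfinity d).submodule = d.submodule.map (infinityEmbedding F) := by
  induction d using Projectivization.ind with
  | h v hv =>
    rw [submodule_pointAtInfinity_mk, Projectivization.submodule_mk, Submodule.map_span,
      Set.image_singleton]
    rfl

theorem pointAtInfinity_mem_pointsOn {d : Projectivization F (F × F)}
    {L : Submodule F (Fin 3 → F)} :
    pointAtInfinity d ∈ pointsOn L ↔ d.submodule ≤ L.comap (infinityEmbedding F) := by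
  rw [pointsOn, Set.mem_ofPred_eq, submodule_pointAtInfinity, Submodule.map_le_iff_le_comap]

theorem pointAtInfinity_mem_pointsOn_Linf (d : Projectivization F (F × F)) :
    pointAtInfinity d ∈ pointsOn (Linf F) := by
  rw [pointAtInfinity_mem_pointsOn, ← range_infinityEmbedding]
  exact fun v _ => LinearMap.mem_range_self _ v

theorem range_pointAtInfinity : Set.range (pointAtInfinity (F := F)) = pointsOn (Linf F) := by
  refine Set.Subset.antisymm ?_ fun P hP => ?_
  · rintro _ ⟨d, rfl⟩
    exact pointAtInfinity_mem_pointsOn_Linf d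
  · obtain ⟨v, hv⟩ : P.rep ∈ LinearMap.range (infinityEmbedding F) := by
      rw [range_infinityEmbedding]
      exact hP (P.submodule_eq ▸ Submodule.mem_span_singleton_self _)
    have hv0 : v ≠ 0 := by
      rintro rfl
      exact P.rep_nonzero (hv.symm.trans (map_zero _))
    refine ⟨Projectivization.mk F v hv0, ?_⟩
    simp only [pointAtInfinity, Projectivization.map_mk, hv, Projectivization.mk_rep]

/-- The affine point `⟨(x, y, 1)⟩`. -/
def affinePoint (v : F × F) : PGPoint F :=
  Projectivization.mk F ![v.1, v.2, 1] fun h => one_ne_zero (congrFun h 2)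

theorem submodule_affinePoint (v : F × F) :
    (affinePoint v).submodule = Submodule.span F {![v.1, v.2, 1]} :=
  Projectivization.submodule_mk _ _

theorem affinePoint_injective : Function.Injective (affinePoint (F := F)) := by
  intro u v huv
  obtain ⟨c, hc⟩ := (Projectivization.mk_eq_mk_iff' _ _ _ _ _).1 huv
  have hc1 : c = 1 := by simpa using congrFun hc 2
  subst hc1
  exact Prod.ext (by simpa using (congrFun hc 0).symm) (by simpa using (congrFun hc 1).symm)

theorem affinePoint_mem_pointsOn {v : F × F} {L : Submodule F (Fin 3 → F)} :
    affinePoint v ∈ pointsOn L ↔ ![v.1, v.2, 1] ∈ L := by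
  rw [pointsOn, Set.mem_ofPred_eq, submodule_affinePoint, Submodule.span_singleton_le_iff_mem]

theorem exists_affinePoint_eq_mk {w : Fin 3 → F} (hw : w 2 ≠ 0) :
    ∃ v, affinePoint v = Projectivization.mk F w fun h => hw (congrFun h 2) := by
  refine ⟨(w 0 / w 2, w 1 / w 2), (Projectivization.mk_eq_mk_iff' _ _ _ _ _).2 ⟨(w 2)⁻¹, ?_⟩⟩
  ext i
  fin_cases i <;> simp [hw, div_eq_inv_mul]

theorem mem_range_affinePoint {P : PGPoint F} (hP : P ∉ pointsOn (Linf F)) :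
    P ∈ Set.range (affinePoint (F := F)) := by
  have hrep : P.rep 2 ≠ 0 := by
    simpa [pointsOn, P.submodule_eq, Submodule.span_singleton_le_iff_mem, Linf] using hP
  obtain ⟨v, hv⟩ := exists_affinePoint_eq_mk hrep
  exact ⟨v, hv.trans P.mk_rep⟩

theorem affinePoint_ne_pointAtInfinity (v : F × F) (d : Projectivization F (F × F)) :
    affinePoint v ≠ pointAtInfinity d := by
  intro h
  have hmem : affinePoint v ∈ pointsOn (Linf F) := h ▸ pointAtInfinity_mem_pointsOn_Linf d
  exact one_ne_zero (α := F) (affinePoint_mem_pointsOn.1 hmem)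

theorem dirs_image_affinePoint (S : Set (F × F)) :
    dirs (affinePoint '' S) = pointAtInfinity '' directions F S := by
  have hcoord {v : F × F} {x y : F}
      (h : (affinePoint v).submodule = Submodule.span F {![x, y, 1]}) : v = (x, y) :=
    affinePoint_injective <| Projectivization.submodule_injective <|
      h.trans (submodule_affinePoint (x, y)).symm
  ext P
  constructor
  · rintro ⟨_, ⟨u, hu, rfl⟩, _, ⟨v, hv, rfl⟩, hne, x₁, y₁, x₂, y₂, h₁, h₂, hP⟩
    obtain rfl := hcoord h₁
    obtain rfl := hcoord h₂
    refine ⟨_, mem_directions_iff_exists_mk_eq.2 ⟨_, hu, _, hv, ne_of_apply_ne _ hne, rfl⟩, ?_⟩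
    exact Projectivization.submodule_injective ((submodule_pointAtInfinity_mk _).trans hP.symm)
  · rintro ⟨d, hd, rfl⟩
    obtain ⟨u, hu, v, hv, hne, rfl⟩ := mem_directions_iff_exists_mk_eq.1 hd
    exact ⟨_, ⟨u, hu, rfl⟩, _, ⟨v, hv, rfl⟩, affinePoint_injective.ne hne, u.1, u.2, v.1, v.2,
      submodule_affinePoint u, submodule_affinePoint v, submodule_pointAtInfinity_mk _⟩

theorem finrank_Linf : finrank F (Linf F) = 2 := by
  rw [← range_infinityEmbedding, LinearMap.finrank_range_of_inj infinityEmbedding_injective]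
  simp

theorem finrank_comap_infinityEmbedding {L : Submodule F (Fin 3 → F)} (hL : IsProjLine F L)
    (hne : L ≠ Linf F) : finrank F (L.comap (infinityEmbedding F)) = 1 := by
  have hL2 : finrank F L = 2 := hL
  have hinf : finrank F (L.comap (infinityEmbedding F)) = finrank F ↑(L ⊓ Linf F) := by
    rw [← range_infinityEmbedding, inf_comm, ← Submodule.map_comap_eq]
    exact (Submodule.equivMapOfInjective _ infinityEmbedding_injective _).finrank_eq
  have hlt : L < L ⊔ Linf F := left_lt_sup.2 fun hle =>
    hne (Submodule.eq_of_le_of_finrank_eq hle (finrank_Linf.trans hL2.symm)).symm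
  have hsup := Submodule.finrank_lt_finrank_of_lt hlt
  have hsup_le : finrank F ↑(L ⊔ Linf F) ≤ 3 := (Submodule.finrank_le _).trans_eq (by simp)
  have hdim := Submodule.finrank_sup_add_finrank_inf_eq L (Linf F)
  rw [finrank_Linf] at hdim
  omega

/-- A line other than the line at infinity is given by its direction `d` and one of its affine
points `v`. -/
theorem exists_mem_pointsOn_iff_of_ne_Linf {L : Submodule F (Fin 3 → F)} (hL : IsProjLine F L)
    (hne : L ≠ Linf F) : ∃ (d : Projectivization F (F × F)) (v : F × F),
      (∀ e, pointAtInfinity e ∈ pointsOn L ↔ e = d) ∧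
        ∀ u, affinePoint u ∈ pointsOn L ↔ u - v ∈ d.submodule := by
  obtain ⟨w, hwL, hw⟩ : ∃ w ∈ L, w 2 ≠ 0 := by
    by_contra! hle
    exact hne (Submodule.eq_of_le_of_finrank_eq hle (Eq.trans hL finrank_Linf.symm))
  obtain ⟨v, hv⟩ := exists_affinePoint_eq_mk hw
  have hvL : ![v.1, v.2, 1] ∈ L := by
    rw [← affinePoint_mem_pointsOn, hv]
    simpa [pointsOn] using hwL
  have hfin := finrank_comap_infinityEmbedding hL hne
  refine ⟨.mk'' _ hfin, v, fun e => ?_, fun u => ?_⟩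
  · rw [pointAtInfinity_mem_pointsOn, ← Projectivization.submodule_injective.eq_iff,
      Projectivization.submodule_mk'']
    exact ⟨fun h => Submodule.eq_of_le_of_finrank_eq h (e.finrank_submodule.trans hfin.symm),
      le_of_eq⟩
  · have hsub : infinityEmbedding F (u - v) = ![u.1, u.2, 1] - ![v.1, v.2, 1] := by
      simp [infinityEmbedding]
    rw [affinePoint_mem_pointsOn, Projectivization.submodule_mk'', Submodule.mem_comap, hsub,
      L.sub_mem_iff_left hvL]

theorem noTangents_image_affinePoint_union [Fintype F] {S : Set (F × F)}
    (hS : S.ncard = Fintype.card F) (hD : 2 * (directions F S).ncard < Fintype.card F + 3) :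
    NoTangents (affinePoint '' S ∪ pointAtInfinity '' (directions F S)ᶜ) := by
  have hV : finrank F (F × F) = 2 := by simp
  rintro L hL ⟨P, ⟨hP, hPL⟩, huniq⟩
  have haffine {u} (hu : u ∈ S) (huL : affinePoint u ∈ pointsOn L) : affinePoint u = P :=
    huniq _ ⟨Or.inl ⟨u, hu, rfl⟩, huL⟩
  have hinfinite {e} (he : e ∉ directions F S) (heL : pointAtInfinity e ∈ pointsOn L) :
      pointAtInfinity e = P :=
    huniq _ ⟨Or.inr ⟨e, he, rfl⟩, heL⟩
  rcases eq_or_ne L (Linf F) with rfl | hne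
  · obtain ⟨d, hd, e, he, hde⟩ :=
      (Set.one_lt_ncard (Set.toFinite _)).1 (one_lt_ncard_compl_directions hV hS hD)
    have hdP := hinfinite hd (pointAtInfinity_mem_pointsOn_Linf d)
    have heP := hinfinite he (pointAtInfinity_mem_pointsOn_Linf e)
    exact hde (pointAtInfinity_injective (hdP.trans heP.symm))
  obtain ⟨d, v, hinf, haff⟩ := exists_mem_pointsOn_iff_of_ne_Linf hL hne
  by_cases hd : d ∈ directions F S
  · obtain ⟨u, hu, rfl⟩ | ⟨e, he, rfl⟩ := hP
    · obtain ⟨w, hw, hwu, hsub⟩ := exists_ne_sub_mem_submodule_of_mem_directions hV hS hD hd hu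
      have hwv : w - v ∈ d.submodule := by
        simpa using add_mem hsub ((haff u).1 hPL)
      exact hwu (affinePoint_injective (haffine hw ((haff w).2 hwv)))
    · exact he ((hinf e).1 hPL ▸ hd)
  · obtain ⟨u, hu, huv⟩ := exists_sub_mem_submodule_of_notMem_directions hV hS hd v
    exact affinePoint_ne_pointAtInfinity u d
      ((haffine hu ((haff u).2 huv)).trans (hinfinite hd ((hinf d).2 rfl)).symm)

end ProjectivePlane

theorem stmt_3_general [Fintype F] {A : Set (PGPoint F)} (hAaff : ∀ P ∈ A, P ∉ pointsOn (Linf F))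
    (hAcard : A.ncard = Fintype.card F) (hD : 2 * (dirs A).ncard < Fintype.card F + 3) :
    NoTangents (A ∪ (pointsOn (Linf F) \ dirs A)) := by
  obtain ⟨S, rfl⟩ : ∃ S, affinePoint '' S = A :=
    Set.subset_range_iff_exists_image_eq.1 fun P hP => mem_range_affinePoint (hAaff P hP)
  rw [Set.ncard_image_of_injective _ affinePoint_injective] at hAcard
  rw [dirs_image_affinePoint, Set.ncard_image_of_injective _ pointAtInfinity_injective] at hD
  rw [dirs_image_affinePoint, ← range_pointAtInfinity,
    Set.range_sdiff_image pointAtInfinity_injective]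
  exact noTangents_image_affinePoint_union hAcard hD

/-- if a set `A` of exactly `q` affine points determines fewer than
`(q+3)/2` directions `D`, then `A ∪ (L∞ \ D)` is a set without tangents. -/
theorem stmt_3 [Fintype F] (p h : ℕ) (hp : p.Prime) (hodd : Odd p)
    (hcard : Fintype.card F = p ^ h)
    (A : Set (PGPoint F)) (hAaff : ∀ P ∈ A, P ∉ pointsOn (Linf F))
    (hAcard : A.ncard = p ^ h)
    (hD : (dirs A).ncard < (p ^ h + 3) / 2) :
    NoTangents (A ∪ (pointsOn (Linf F) \ dirs A)) :=
  stmt_3_general hAaff (hAcard.trans hcard.symm) (by rw [hcard]; omega)
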